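/- arXiv:solv-int/9907001 — 2 statements merged into one kernel-verified Lean document; each statement's English description precedes it below -/
import Mathlib

section
/- Let w, f, g, φ, ψ : ℝ → ℝ with w, f, φ, ψ differentiable on ℝ, and suppose f(x)·w'(x) = −g(x)·w(x) for all x. Define the operator n by (n φ)(x) = f(x)φ'(x) + ((f'(x) − g(x))/2)·φ(x). Assume that the functions x ↦ w(x)·φ(x)·(n ψ)(x) and x ↦ w(x)·(n φ)(x)·ψ(x) are integrable on ℝ, and that f(x)·w(x)·φ(x)·ψ(x) → 0 as x → +∞ and as x → −∞. Then ∫_ℝ w(x)·φ(x)·(n ψ)(x) dx = − ∫_ℝ w(x)·(n φ)(x)·ψ(x) dx; that is, the operator n is skew-adjoint with respect to the inner product (φ, ψ)₂ = ∫_ℝ w(x)φ(x)ψ(x) dx. -/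
open MeasureTheory Filter

/-- The Adler–van Moerbeke operator `n = f·(d/dx) + (f' − g)/2` associated to the
weight `w = e^{−2V}` with `2V' = g/f` (equivalently `f·w' = −g·w`). -/
noncomputable def nOp (f g φ : ℝ → ℝ) : ℝ → ℝ :=
  fun x => f x * deriv φ x + ((deriv f x - g x) / 2) * φ x

-- `f w' φ ψ = -g w φ ψ` and `f' w φ ψ` are each split evenly between the two summands by the
-- coefficient `(f' - g) / 2` of `nOp`.
theorem hasDerivAt_mul_weight_mul_mul {w f g φ ψ : ℝ → ℝ} {x : ℝ}
    (hw : DifferentiableAt ℝ w x) (hf : DifferentiableAt ℝ f x)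
    (hφ : DifferentiableAt ℝ φ x) (hψ : DifferentiableAt ℝ ψ x)
    (hweight : f x * deriv w x = -(g x * w x)) :
    HasDerivAt (fun y => f y * w y * φ y * ψ y)
      (w x * φ x * nOp f g ψ x + w x * nOp f g φ x * ψ x) x := by
  have hprod := ((hf.hasDerivAt.mul hw.hasDerivAt).mul hφ.hasDerivAt).mul hψ.hasDerivAt
  refine hprod.congr_deriv ?_
  simp only [nOp, Pi.mul_apply]
  linear_combination (φ x * ψ x) * hweight

theorem integral_eq_neg_integral_of_hasDerivAt_add {E : Type*} [NormedAddCommGroup E]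
    [NormedSpace ℝ E] [CompleteSpace E] {F u v : ℝ → E} {m : E}
    (hF : ∀ x, HasDerivAt F (u x + v x) x) (hu : Integrable u) (hv : Integrable v)
    (hbot : Tendsto F atBot (nhds m)) (htop : Tendsto F atTop (nhds m)) :
    ∫ x, u x = -∫ x, v x := by
  rw [eq_neg_iff_add_eq_zero]
  calc (∫ x, u x) + ∫ x, v x = ∫ x, u x + v x := (integral_add hu hv).symm
    _ = m - m := integral_of_hasDerivAt_of_tendsto hF (hu.add hv) hbot htop
    _ = 0 := sub_self m

/-- The operator `n` is skew-adjoint with respect to the inner product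
`(φ, ψ)₂ = ∫ w φ ψ`. -/
theorem nOp_skew_adjoint (w f g φ ψ : ℝ → ℝ)
    (hw : Differentiable ℝ w) (hf : Differentiable ℝ f)
    (hφ : Differentiable ℝ φ) (hψ : Differentiable ℝ ψ)
    (hweight : ∀ x, f x * deriv w x = - (g x * w x))
    (hint1 : Integrable (fun x => w x * φ x * nOp f g ψ x))
    (hint2 : Integrable (fun x => w x * nOp f g φ x * ψ x))
    (htop : Tendsto (fun x => f x * w x * φ x * ψ x) atTop (nhds 0))
    (hbot : Tendsto (fun x => f x * w x * φ x * ψ x) atBot (nhds 0)) :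
    ∫ x : ℝ, w x * φ x * nOp f g ψ x = - ∫ x : ℝ, w x * nOp f g φ x * ψ x :=
  integral_eq_neg_integral_of_hasDerivAt_add
    (fun x => hasDerivAt_mul_weight_mul_mul (hw x) (hf x) (hφ x) (hψ x) (hweight x))
    hint1 hint2 hbot htop
end

section
/- Define q_{2m}(x) = p_{2m}(x) and q_{2m+1}(x) = p_{2m+1}(x) − m·p_{2m−1}(x) (with p_{−1} = 0), where p_k are the monic Hermite polynomials. Then the family {q_j} is skew orthogonal with respect to the β = 1 skew inner product with weight e^{−x²/2} on ℝ: for all natural numbers m, n one has ⟨q_{2m}, q_{2n}⟩₁ = 0, ⟨q_{2m+1}, q_{2n+1}⟩₁ = 0, and ⟨q_{2m}, q_{2n+1}⟩₁ = 0 if m ≠ n, while ⟨q_{2m}, q_{2m+1}⟩₁ = 2^{−2m} √π (2m)!. -/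
open MeasureTheory

/-- The physicists' Hermite polynomials. -/
noncomputable def hermiteH : ℕ → ℝ → ℝ
  | 0, _ => 1
  | 1, x => 2 * x
  | (n + 2), x => 2 * x * hermiteH (n + 1) x - 2 * (n + 1) * hermiteH n x

/-- The monic Hermite polynomials `p_k = 2^{−k} H_k`. -/
noncomputable def hermiteP (k : ℕ) (x : ℝ) : ℝ := hermiteH k x / 2 ^ k

/-- The skew orthogonal candidates: `q_{2m} = p_{2m}`, `q_{2m+1} = p_{2m+1} − m p_{2m−1}`. -/
noncomputable def qGOE (j : ℕ) (x : ℝ) : ℝ :=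
  if j % 2 = 0 then hermiteP j x
  else hermiteP j x - (j / 2 : ℕ) * hermiteP (j - 2) x

/-- The β = 1 skew inner product with weight `e^{−x²/2}` on ℝ. -/
noncomputable def sip1 (f g : ℝ → ℝ) : ℝ :=
  (1 / 2) * ∫ x : ℝ, ∫ y : ℝ,
    Real.exp (-x ^ 2 / 2) * Real.exp (-y ^ 2 / 2) * Real.sign (y - x) * f x * g y

/-!
The fundamental theorem of calculus on either side of `x` gives `∫ sgn (y - x) F' y dy = -2 F x`
for every integrable `F` with integrable derivative. Since
`q_{2n+1} e^{-x²/2} = -(p_{2n} e^{-x²/2})'`, the double integral `⟨q_{2m}, q_{2n+1}⟩₁` collapses to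
`∫ p_{2m} p_{2n} e^{-x²} dx`, and skew orthogonality becomes the classical orthogonality of the
Hermite polynomials. Indices of equal parity pair to zero because the kernel `sgn (y - x)` is odd
under `(x, y) ↦ (-x, -y)`.
-/

open Polynomial Real Set

theorem integral_sign_sub_smul_of_hasDerivAt_of_integrable {E : Type*} [NormedAddCommGroup E]
    [NormedSpace ℝ E] [CompleteSpace E] {f f' : ℝ → E} (hderiv : ∀ y, HasDerivAt f (f' y) y)
    (hf' : Integrable f') (hf : Integrable f) (x : ℝ) :
    ∫ y, Real.sign (y - x) • f' y = -((2 : ℝ) • f x) := by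
  have sign_left : -f' =ᵐ[volume.restrict (Iic x)] fun y ↦ Real.sign (y - x) • f' y := by
    rw [← restrict_Iio_eq_restrict_Iic]
    filter_upwards [self_mem_ae_restrict measurableSet_Iio] with y hy
    rw [Real.sign_of_neg (sub_neg.2 hy), neg_one_smul, Pi.neg_apply]
  have sign_right : f' =ᵐ[volume.restrict (Ioi x)] fun y ↦ Real.sign (y - x) • f' y := by
    filter_upwards [self_mem_ae_restrict measurableSet_Ioi] with y hy
    rw [Real.sign_of_pos (sub_pos.2 hy), one_smul]
  have integral_left : ∫ y in Iic x, f' y = f x := by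
    rw [integral_Iic_of_hasDerivAt_of_tendsto' (fun y _ ↦ hderiv y) hf'.integrableOn
      (tendsto_zero_of_hasDerivAt_of_integrableOn_Iic (a := x) (fun y _ ↦ hderiv y)
        hf'.integrableOn hf.integrableOn), sub_zero]
  have integral_right : ∫ y in Ioi x, f' y = -f x := by
    rw [integral_Ioi_of_hasDerivAt_of_tendsto' (fun y _ ↦ hderiv y) hf'.integrableOn
      (tendsto_zero_of_hasDerivAt_of_integrableOn_Ioi (a := x) (fun y _ ↦ hderiv y)
        hf'.integrableOn hf.integrableOn), zero_sub]
  rw [← intervalIntegral.integral_Iic_add_Ioi (b := x)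
      (hf'.neg.integrableOn.congr sign_left) (hf'.integrableOn.congr sign_right),
    ← integral_congr_ae sign_left, ← integral_congr_ae sign_right, integral_neg', integral_left,
    integral_right, two_smul, neg_add]

theorem integrable_eval_mul_exp_neg_mul_sq {b : ℝ} (hb : 0 < b) (P : ℝ[X]) :
    Integrable fun x ↦ P.eval x * exp (-b * x ^ 2) := by
  induction P using Polynomial.induction_on' with
  | add P Q hP hQ => simpa only [eval_add, add_mul] using hP.fun_add hQ
  | monomial n a =>
    have hn : (-1 : ℝ) < n := neg_one_lt_zero.trans_le n.cast_nonneg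
    simpa only [eval_monomial, rpow_natCast, mul_assoc]
      using (integrable_rpow_mul_exp_neg_mul_sq hb hn).const_mul a

theorem hasDerivAt_exp_neg_mul_sq (b x : ℝ) :
    HasDerivAt (fun x ↦ exp (-b * x ^ 2)) (-2 * b * x * exp (-b * x ^ 2)) x := by
  refine ((hasDerivAt_pow 2 x).const_mul (-b)).exp.congr_deriv ?_
  push_cast
  ring

section sip1

variable {f g : ℝ → ℝ}

theorem sip1_eq_zero_of_neg_mul_neg (h : ∀ x y, f (-x) * g (-y) = f x * g y) : sip1 f g = 0 := by
  set K : ℝ → ℝ → ℝ := fun x y ↦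
    exp (-x ^ 2 / 2) * exp (-y ^ 2 / 2) * Real.sign (y - x) * f x * g y with hK
  have K_neg_neg (x y : ℝ) : K (-x) (-y) = -K x y := by
    have sign_neg_sub_neg : Real.sign (-y - -x) = -Real.sign (y - x) := by
      rw [← Real.sign_neg, neg_sub_neg, neg_sub]
    simp only [hK, sign_neg_sub_neg, neg_sq]
    linear_combination
      -(exp (-x ^ 2 / 2) * exp (-y ^ 2 / 2) * Real.sign (y - x)) * h x y
  have integral_K : ∫ x, ∫ y, K x y = -∫ x, ∫ y, K x y :=
    calc ∫ x, ∫ y, K x y = ∫ x, ∫ y, K (-x) (-y) := by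
          rw [← integral_neg_eq_self]
          exact integral_congr_ae (.of_forall fun x ↦ (integral_neg_eq_self (K (-x)) volume).symm)
      _ = -∫ x, ∫ y, K x y := by simp only [K_neg_neg, integral_neg]
  change 1 / 2 * ∫ x, ∫ y, K x y = 0
  linarith

theorem sip1_eq_integral_of_hasDerivAt {G : ℝ → ℝ}
    (hderiv : ∀ y, HasDerivAt G (-(exp (-y ^ 2 / 2) * g y)) y)
    (hg : Integrable fun y ↦ exp (-y ^ 2 / 2) * g y) (hG : Integrable G) :
    sip1 f g = ∫ x, exp (-x ^ 2 / 2) * f x * G x := by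
  have inner_integral (x : ℝ) :
      ∫ y, Real.sign (y - x) * (exp (-y ^ 2 / 2) * g y) = 2 * G x := by
    have h := integral_sign_sub_smul_of_hasDerivAt_of_integrable hderiv hg.neg hG x
    simpa only [smul_eq_mul, mul_neg, integral_neg, neg_inj] using h
  rw [sip1, ← integral_const_mul]
  congr 1 with x
  calc 1 / 2 * ∫ y, exp (-x ^ 2 / 2) * exp (-y ^ 2 / 2) * Real.sign (y - x) * f x * g y
      = 1 / 2 * ∫ y, exp (-x ^ 2 / 2) * f x *
          (Real.sign (y - x) * (exp (-y ^ 2 / 2) * g y)) := by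
        congr 2 with y
        ring
    _ = exp (-x ^ 2 / 2) * f x * G x := by
        rw [integral_const_mul, inner_integral]
        ring

end sip1

section hermiteP

theorem hermiteP_zero (x : ℝ) : hermiteP 0 x = 1 := by
  simp only [hermiteP, hermiteH, pow_zero, div_one]

-- At `n = 0` the truncated index `n - 1` is harmless: its coefficient vanishes, as `p_{-1} = 0`.
theorem hermiteP_succ (n : ℕ) (x : ℝ) :
    hermiteP (n + 1) x = x * hermiteP n x - n / 2 * hermiteP (n - 1) x := by
  cases n with
  | zero => simp [hermiteP, hermiteH]
  | succ n =>
    simp only [hermiteP, hermiteH, Nat.add_sub_cancel, pow_succ]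
    push_cast
    field_simp

theorem hermiteP_neg (n : ℕ) (x : ℝ) : hermiteP n (-x) = (-1) ^ n * hermiteP n x := by
  induction n using Nat.twoStepInduction with
  | zero => simp only [hermiteP_zero, pow_zero, one_mul]
  | one => simp [hermiteP_succ, hermiteP_zero]
  | more n ih ih' =>
    simp only [hermiteP_succ (n + 1), Nat.add_sub_cancel, ih, ih']
    ring

theorem exists_polynomial_eval_eq_hermiteP (n : ℕ) : ∃ P : ℝ[X], ∀ x, P.eval x = hermiteP n x := by
  induction n using Nat.twoStepInduction with
  | zero => exact ⟨1, fun x ↦ by rw [eval_one, hermiteP_zero]⟩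
  | one => exact ⟨X, fun x ↦ by simp [hermiteP_succ, hermiteP_zero]⟩
  | more n ih ih' =>
    obtain ⟨P, hP⟩ := ih
    obtain ⟨Q, hQ⟩ := ih'
    refine ⟨X * Q - C ((n + 1 : ℕ) / 2 : ℝ) * P, fun x ↦ ?_⟩
    simp only [eval_sub, eval_mul, eval_X, eval_C, hP, hQ, hermiteP_succ (n + 1),
      Nat.add_sub_cancel]

theorem hasDerivAt_hermiteP (n : ℕ) (x : ℝ) :
    HasDerivAt (hermiteP n) (n * hermiteP (n - 1) x) x := by
  induction n using Nat.twoStepInduction with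
  | zero =>
    simpa only [Nat.cast_zero, zero_mul, ← funext hermiteP_zero] using hasDerivAt_const x (1 : ℝ)
  | one =>
    have hermiteP_one : hermiteP 1 = id := by
      ext x
      simp [hermiteP_succ, hermiteP_zero]
    simpa [hermiteP_one, hermiteP_zero] using hasDerivAt_id x
  | more n ih ih' =>
    rw [funext (hermiteP_succ (n + 1))]
    refine (((hasDerivAt_id x).mul ih').sub (ih.const_mul _)).congr_deriv ?_
    simp only [Nat.add_sub_cancel, id_eq, show n + 2 - 1 = n + 1 from rfl]
    push_cast
    linear_combination -(n + 1 : ℝ) * hermiteP_succ n x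

-- `b = 1` is Rodrigues' formula; `b = 1 / 2` with `n` even gives the coefficient in `q_{n+1}`.
theorem hasDerivAt_hermiteP_mul_exp_neg_mul_sq (b : ℝ) (n : ℕ) (x : ℝ) :
    HasDerivAt (fun x ↦ hermiteP n x * exp (-b * x ^ 2))
      (((1 - b) * n * hermiteP (n - 1) x - 2 * b * hermiteP (n + 1) x) * exp (-b * x ^ 2)) x := by
  refine ((hasDerivAt_hermiteP n x).mul (hasDerivAt_exp_neg_mul_sq b x)).congr_deriv ?_
  rw [hermiteP_succ]
  ring

theorem integrable_hermiteP_mul_exp_neg_mul_sq {b : ℝ} (hb : 0 < b) (n : ℕ) :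
    Integrable fun x ↦ hermiteP n x * exp (-b * x ^ 2) := by
  obtain ⟨P, hP⟩ := exists_polynomial_eval_eq_hermiteP n
  simpa only [hP] using integrable_eval_mul_exp_neg_mul_sq hb P

theorem integrable_hermiteP_mul_hermiteP_mul_exp_neg_mul_sq {b : ℝ} (hb : 0 < b) (m n : ℕ) :
    Integrable fun x ↦ hermiteP m x * (hermiteP n x * exp (-b * x ^ 2)) := by
  obtain ⟨P, hP⟩ := exists_polynomial_eval_eq_hermiteP m
  obtain ⟨Q, hQ⟩ := exists_polynomial_eval_eq_hermiteP n
  simpa only [eval_mul, hP, hQ, mul_assoc] using integrable_eval_mul_exp_neg_mul_sq hb (P * Q)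

theorem integral_hermiteP_mul_hermiteP_succ (m n : ℕ) :
    ∫ x, hermiteP m x * (hermiteP (n + 1) x * exp (-x ^ 2)) =
      m / 2 * ∫ x, hermiteP (m - 1) x * (hermiteP n x * exp (-x ^ 2)) := by
  have rodrigues (x : ℝ) : HasDerivAt (fun x ↦ hermiteP n x * exp (-x ^ 2))
      (-2 * (hermiteP (n + 1) x * exp (-x ^ 2))) x := by
    simpa only [sub_self, zero_mul, zero_sub, mul_one, neg_mul, one_mul, mul_assoc]
      using hasDerivAt_hermiteP_mul_exp_neg_mul_sq 1 n x
  have integrable (k l : ℕ) : Integrable fun x ↦ hermiteP k x * (hermiteP l x * exp (-x ^ 2)) := by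
    simpa only [neg_one_mul] using integrable_hermiteP_mul_hermiteP_mul_exp_neg_mul_sq one_pos k l
  have by_parts := integral_mul_deriv_eq_deriv_mul_of_integrable
    (fun x _ ↦ hasDerivAt_hermiteP m x) (fun x _ ↦ rodrigues x)
    (((integrable m (n + 1)).const_mul (-2)).congr (.of_forall fun x ↦ by
      simp only [Pi.mul_apply]; ring))
    (((integrable (m - 1) n).const_mul m).congr (.of_forall fun x ↦ by
      simp only [Pi.mul_apply]; ring))
    (integrable m n)
  simp only [mul_left_comm _ (-2 : ℝ), mul_assoc (m : ℝ), integral_const_mul] at by_parts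
  linarith

theorem integral_hermiteP_mul_hermiteP_of_ne {m n : ℕ} (h : m ≠ n) :
    ∫ x, hermiteP m x * (hermiteP n x * exp (-x ^ 2)) = 0 := by
  induction m generalizing n with
  | zero =>
    obtain ⟨k, rfl⟩ := Nat.exists_eq_succ_of_ne_zero h.symm
    rw [integral_hermiteP_mul_hermiteP_succ, Nat.cast_zero, zero_div, zero_mul]
  | succ m ih =>
    cases n with
    | zero =>
      simp only [mul_left_comm (hermiteP (m + 1) _)]
      rw [integral_hermiteP_mul_hermiteP_succ, Nat.cast_zero, zero_div, zero_mul]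
    | succ n =>
      rw [integral_hermiteP_mul_hermiteP_succ, Nat.add_sub_cancel, ih (by simpa using h), mul_zero]

theorem integral_hermiteP_mul_hermiteP_self (n : ℕ) :
    ∫ x, hermiteP n x * (hermiteP n x * exp (-x ^ 2)) = √π * n.factorial / 2 ^ n := by
  induction n with
  | zero => simpa [hermiteP_zero] using integral_gaussian 1
  | succ n ih =>
    rw [integral_hermiteP_mul_hermiteP_succ, Nat.add_sub_cancel, ih, Nat.factorial_succ, pow_succ]
    push_cast
    ring

end hermiteP

section qGOE

theorem qGOE_two_mul (m : ℕ) : qGOE (2 * m) = hermiteP (2 * m) := by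
  ext x
  rw [qGOE, if_pos (Nat.mul_mod_right 2 m)]

theorem qGOE_two_mul_add_one (m : ℕ) (x : ℝ) :
    qGOE (2 * m + 1) x = hermiteP (2 * m + 1) x - m * hermiteP (2 * m - 1) x := by
  rw [qGOE, if_neg (by omega), show (2 * m + 1) / 2 = m by omega,
    show 2 * m + 1 - 2 = 2 * m - 1 by omega]

theorem qGOE_neg (j : ℕ) (x : ℝ) : qGOE j (-x) = (-1) ^ j * qGOE j x := by
  obtain ⟨m, rfl | rfl⟩ := j.even_or_odd'
  · rw [qGOE_two_mul, hermiteP_neg]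
  · rw [qGOE_two_mul_add_one, qGOE_two_mul_add_one, hermiteP_neg, hermiteP_neg]
    cases m with
    | zero => simp
    | succ m =>
      rw [show 2 * (m + 1) - 1 = 2 * m + 1 by omega]
      ring

theorem sip1_qGOE_eq_zero_of_even_add {j k : ℕ} (h : Even (j + k)) :
    sip1 (qGOE j) (qGOE k) = 0 :=
  sip1_eq_zero_of_neg_mul_neg fun x y ↦ by
    rw [qGOE_neg, qGOE_neg, mul_mul_mul_comm, ← pow_add, h.neg_one_pow, one_mul]

theorem exp_neg_sq_div_two (x : ℝ) : exp (-x ^ 2 / 2) = exp (-(1 / 2) * x ^ 2) := by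
  congr 1
  ring

theorem hasDerivAt_hermiteP_two_mul_mul_exp_neg_sq_div_two (n : ℕ) (x : ℝ) :
    HasDerivAt (fun x ↦ hermiteP (2 * n) x * exp (-x ^ 2 / 2))
      (-(exp (-x ^ 2 / 2) * qGOE (2 * n + 1) x)) x := by
  simp only [exp_neg_sq_div_two]
  refine (hasDerivAt_hermiteP_mul_exp_neg_mul_sq (1 / 2) (2 * n) x).congr_deriv ?_
  rw [qGOE_two_mul_add_one]
  push_cast
  ring

theorem sip1_qGOE_two_mul_add_one (f : ℝ → ℝ) (n : ℕ) :
    sip1 f (qGOE (2 * n + 1)) = ∫ x, f x * (hermiteP (2 * n) x * exp (-x ^ 2)) := by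
  have integrable_hermiteP (k : ℕ) : Integrable fun x ↦ hermiteP k x * exp (-x ^ 2 / 2) := by
    simpa only [exp_neg_sq_div_two] using integrable_hermiteP_mul_exp_neg_mul_sq one_half_pos k
  have integrable_qGOE : Integrable fun x ↦ exp (-x ^ 2 / 2) * qGOE (2 * n + 1) x := by
    refine ((integrable_hermiteP (2 * n + 1)).sub
      ((integrable_hermiteP (2 * n - 1)).const_mul n)).congr (.of_forall fun x ↦ ?_)
    simp only [Pi.sub_apply, qGOE_two_mul_add_one]
    ring
  rw [sip1_eq_integral_of_hasDerivAt (hasDerivAt_hermiteP_two_mul_mul_exp_neg_sq_div_two n)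
    integrable_qGOE (integrable_hermiteP (2 * n))]
  congr 1 with x
  have exp_split : exp (-x ^ 2) = exp (-x ^ 2 / 2) * exp (-x ^ 2 / 2) := by
    rw [← exp_add, add_halves]
  rw [exp_split]
  ring

end qGOE

/-- The family `{q_j}` is skew orthogonal for the β = 1 Hermite skew inner product,
with normalizations `r_m = 2^{−2m} √π (2m)!`. -/
theorem hermite_skew_orthogonal_beta1 (m n : ℕ) :
    sip1 (qGOE (2 * m)) (qGOE (2 * n)) = 0 ∧
    sip1 (qGOE (2 * m + 1)) (qGOE (2 * n + 1)) = 0 ∧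
    (m ≠ n → sip1 (qGOE (2 * m)) (qGOE (2 * n + 1)) = 0) ∧
    sip1 (qGOE (2 * m)) (qGOE (2 * m + 1))
      = Real.sqrt Real.pi * (Nat.factorial (2 * m)) / 2 ^ (2 * m) := by
  refine ⟨sip1_qGOE_eq_zero_of_even_add (by grind), sip1_qGOE_eq_zero_of_even_add (by grind),
    fun hmn ↦ ?_, ?_⟩
  · rw [sip1_qGOE_two_mul_add_one, qGOE_two_mul, integral_hermiteP_mul_hermiteP_of_ne (by omega)]
  · rw [sip1_qGOE_two_mul_add_one, qGOE_two_mul, integral_hermiteP_mul_hermiteP_self]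
end
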